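/- For p > 2 and all j ≥ 3, |b_j(p)| < (2π_{p'}/(π²(p-1))) · [2 + (π²/2)(p-2)] · j^{-p'}, where p' = p/(p-1) and b_j(p) = 2∫₀¹ cos_p(π_p x) cos(jπx) dx. -/

import Mathlib

open Real Set

noncomputable def Fp (p y : ℝ) : ℝ := ∫ t in (0:ℝ)..y, (1 - t ^ p) ^ (-(1/p))

noncomputable def pip (p : ℝ) : ℝ := 2 * Fp p 1

/-!
For `p ≥ 2` the function `cos_p` is decreasing and concave on the first quarter period
`[0, π_p / 2]`. The Fourier coefficient vanishes for even `j` by reflection in `π_p / 2`; for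
odd `j` it is, after rescaling and up to sign, the integral of `K · sin` with `K` concave,
increasing and zero at the origin, over an interval `[0, mπ + π / 2]`. The contributions of the
half-periods after the first quarter alternate in sign and decrease in size by concavity, and
the first of them is at most twice that of the quarter `[0, π / 2]`, so the integral is bounded
by its part over that quarter. There `cos_p x ≤ ((p - 1) (π_p / 2 - x)) ^ (1 / (p - 1))`, and
Bernoulli's inequality `θ ^ r ≤ 1 + r (θ - 1)` with `∫ θ in 0..π/2, (1 + r (θ - 1)) sin θ = 1`
gives `|b_j| ≤ (4 / π) (π_{p'} / π) ^ (1 / (p - 1)) j ^ (-p')`, because Euler's reflection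
formula yields `π_{p'} = (p - 1) π_p`. Bernoulli's inequality once more bounds the power of
`π_{p'} / π`.
-/

open MeasureTheory

section Reflection

variable {E : Type*} [NormedAddCommGroup E] [NormedSpace ℝ E] {f : ℝ → E} {a : ℝ}

lemma integral_eq_zero_of_comp_sub_eq_neg (hf : ∀ x, f (a - x) = -f x) :
    ∫ x in (0 : ℝ)..a, f x = 0 := by
  have hneg : ∫ x in (0 : ℝ)..a, f x = -∫ x in (0 : ℝ)..a, f x := by
    have hsub := intervalIntegral.integral_comp_sub_left f (a := 0) (b := a) a
    simpa [hf] using hsub.symm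
  have htwo : (2 : ℝ) • ∫ x in (0 : ℝ)..a, f x = 0 := by
    rw [two_smul, ← eq_neg_iff_add_eq_zero, ← hneg]
  exact (smul_eq_zero.mp htwo).resolve_left two_ne_zero

lemma integral_eq_two_smul_of_comp_sub_eq (hf : ∀ x, f (a - x) = f x) :
    ∫ x in (0 : ℝ)..a, f x = (2 : ℝ) • ∫ x in (0 : ℝ)..(a / 2), f x := by
  by_cases hint : IntervalIntegrable f volume 0 (a / 2)
  · have hint' : IntervalIntegrable f volume (a / 2) a := by
      simpa [hf, sub_half] using (hint.comp_sub_left a).symm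
    have hhalf : ∫ x in (a / 2)..a, f x = ∫ x in (0 : ℝ)..(a / 2), f x := by
      have hsub := intervalIntegral.integral_comp_sub_left f (a := 0) (b := a / 2) a
      simpa [hf, sub_half] using hsub.symm
    rw [← intervalIntegral.integral_add_adjacent_intervals hint hint', hhalf, two_smul]
  · have hmem : a / 2 ∈ uIcc 0 a := by
      rcases le_total 0 a with ha | ha
      · rw [uIcc_of_le ha]; constructor <;> linarith
      · rw [uIcc_of_ge ha]; constructor <;> linarith
    have hint' : ¬IntervalIntegrable f volume 0 a :=
      fun h ↦ hint (h.mono_set (uIcc_subset_uIcc_left hmem))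
    rw [intervalIntegral.integral_undef hint, intervalIntegral.integral_undef hint', smul_zero]

lemma deriv_const_sub_eq_neg (hf : ∀ x, f (a - x) = f x) (x : ℝ) :
    deriv f (a - x) = -deriv f x := by
  rw [← neg_eq_iff_eq_neg, ← deriv_comp_const_sub, funext hf]

end Reflection

section FoldedIntegral

variable {E : Type*} [NormedAddCommGroup E] {f : ℝ → E} {c h : ℝ}

lemma intervalIntegrable_of_le_of_le {μ : Measure ℝ} {a b c d : ℝ}
    (hf : IntervalIntegrable f μ a d) (hab : a ≤ b) (hbc : b ≤ c) (hcd : c ≤ d) :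
    IntervalIntegrable f μ b c :=
  hf.mono_set <| by
    rw [uIcc_of_le hbc, uIcc_of_le (hab.trans (hbc.trans hcd))]
    exact Icc_subset_Icc hab hcd

lemma intervalIntegrable_comp_const_add (hf : IntervalIntegrable f volume (c - h) (c + h)) :
    IntervalIntegrable (fun t ↦ f (c + t)) volume 0 h := by
  have hsub : uIcc c (c + h) ⊆ uIcc (c - h) (c + h) := by
    refine uIcc_subset_uIcc_right ?_
    rcases le_total 0 h with hh | hh
    · rw [uIcc_of_le (by linarith)]; constructor <;> linarith
    · rw [uIcc_of_ge (by linarith)]; constructor <;> linarith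
  simpa using (hf.mono_set hsub).comp_add_left c

lemma intervalIntegrable_comp_const_sub (hf : IntervalIntegrable f volume (c - h) (c + h)) :
    IntervalIntegrable (fun t ↦ f (c - t)) volume 0 h := by
  have hneg : IntervalIntegrable (fun t ↦ f (c - t)) volume (0 - h) (0 + h) := by
    simpa using (hf.comp_sub_left c).symm
  simpa using intervalIntegrable_comp_const_add hneg

lemma integral_sub_add_eq_integral_fold [NormedSpace ℝ E]
    (hf : IntervalIntegrable f volume (c - h) (c + h)) :
    ∫ x in (c - h)..(c + h), f x = ∫ t in (0 : ℝ)..h, (f (c + t) + f (c - t)) := by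
  have hr := intervalIntegrable_comp_const_add hf
  have hl := intervalIntegrable_comp_const_sub hf
  have hright : ∫ t in (0 : ℝ)..h, f (c + t) = ∫ x in c..(c + h), f x := by
    simp [intervalIntegral.integral_comp_add_left f]
  have hleft : ∫ t in (0 : ℝ)..h, f (c - t) = ∫ x in (c - h)..c, f x := by
    simp [intervalIntegral.integral_comp_sub_left f]
  rw [intervalIntegral.integral_add hr hl, hright, hleft,
    add_comm (∫ x in c..(c + h), f x), intervalIntegral.integral_add_adjacent_intervals]
  · simpa using (hl.comp_sub_left c).symm
  · simpa [add_comm h] using hr.comp_add_left (-c)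

end FoldedIntegral

lemma alternating_sum_mem_Icc {R : Type*} [CommRing R] [LinearOrder R] [IsStrictOrderedRing R]
    {D : ℕ → R} {n : ℕ} (hD : ∀ k < n, D (k + 1) ≤ D k) (hn : 0 ≤ D n) :
    ∑ k ∈ Finset.range (n + 1), (-1) ^ k * D k ∈ Icc 0 (D 0) := by
  induction n generalizing D with
  | zero => simpa using hn
  | succ n ih =>
    have htail := ih (D := fun k ↦ D (k + 1)) (fun k hk ↦ hD (k + 1) (by omega)) hn
    have hsplit : ∑ k ∈ Finset.range (n + 2), (-1) ^ k * D k =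
        D 0 - ∑ k ∈ Finset.range (n + 1), (-1) ^ k * D (k + 1) := by
      simp [Finset.sum_range_succ' _ (n + 1), pow_succ, Finset.sum_neg_distrib, sub_eq_neg_add]
    have hD0 := hD 0 (by omega)
    rw [hsplit]
    constructor <;> linarith [htail.1, htail.2]

lemma sub_le_sub_of_concaveOn {𝕜 : Type*} [Field 𝕜] [LinearOrder 𝕜] [IsStrictOrderedRing 𝕜]
    {f : 𝕜 → 𝕜} {s : Set 𝕜} (hf : ConcaveOn 𝕜 s f) {x y d : 𝕜} (hx : x ∈ s) (hy : y + d ∈ s)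
    (hxy : x ≤ y) (hd : 0 ≤ d) : f (y + d) - f y ≤ f (x + d) - f x := by
  rcases hd.eq_or_lt with rfl | hd
  · simp
  have hxd : x + d ∈ s := hf.1.ordConnected.out hx hy ⟨by linarith, by linarith⟩
  have hys : y ∈ s := hf.1.ordConnected.out hx hy ⟨hxy, by linarith⟩
  have hslope : slope f y (y + d) ≤ slope f x (x + d) := calc
    slope f y (y + d) = slope f (y + d) y := slope_comm ..
    _ ≤ slope f (y + d) x :=
      hf.slope_anti hy ⟨hx, by simp; linarith⟩ ⟨hys, by simp; linarith⟩ hxy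
    _ = slope f x (y + d) := slope_comm ..
    _ ≤ slope f x (x + d) :=
      hf.slope_anti hx ⟨hxd, by simp; linarith⟩ ⟨hy, by simp; linarith⟩ (by linarith)
  simpa [slope_def_field, div_le_div_iff_of_pos_right hd] using hslope

lemma concaveOn_comp_const_sub_div {f : ℝ → ℝ} {s t : Set ℝ} {a ω : ℝ} (hf : ConcaveOn ℝ s f)
    (ht : Convex ℝ t) (hts : MapsTo (fun θ ↦ a - θ / ω) t s) :
    ConcaveOn ℝ t (fun θ ↦ f (a - θ / ω)) := by
  have haff : ∀ θ, AffineMap.lineMap a (a - ω⁻¹) θ = a - θ / ω := fun θ ↦ by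
    simp [AffineMap.lineMap_apply]; ring
  have hcomp := hf.comp_affineMap (AffineMap.lineMap a (a - ω⁻¹))
  simpa [Function.comp_def, haff] using hcomp.subset (fun θ hθ ↦ by simpa [haff] using hts hθ) ht

section Oscillation

variable {K : ℝ → ℝ} {k : ℕ}

/-- The integral of `K · sin` over the half-period `[kπ - π/2, kπ + π/2]`, folded about the zero
`kπ` of `sin` and stripped of the sign `(-1) ^ k`, so that it is nonnegative for increasing `K`. -/
noncomputable def sinBlock (K : ℝ → ℝ) (k : ℕ) : ℝ :=
  ∫ t in (0 : ℝ)..(π / 2), (K (k * π + t) - K (k * π - t)) * sin t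

lemma integral_mul_sin_eq_sinBlock
    (hK : IntervalIntegrable K volume (k * π - π / 2) (k * π + π / 2)) :
    ∫ x in (k * π - π / 2)..(k * π + π / 2), K x * sin x = (-1) ^ k * sinBlock K k := by
  rw [integral_sub_add_eq_integral_fold (hK.mul_continuousOn continuous_sin.continuousOn),
    sinBlock, ← intervalIntegral.integral_const_mul]
  congr 1 with t
  rw [add_comm (k * π) t, sin_add_nat_mul_pi, sin_nat_mul_pi_sub]
  ring

lemma integral_mul_sin_eq_sub_sum_sinBlock {m : ℕ}
    (hK : IntervalIntegrable K volume 0 (m * π + π / 2)) :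
    ∫ x in (0 : ℝ)..(m * π + π / 2), K x * sin x =
      (∫ x in (0 : ℝ)..(π / 2), K x * sin x) -
        ∑ k ∈ Finset.range m, (-1) ^ k * sinBlock K (k + 1) := by
  have hmπ : 0 ≤ m * π := by positivity
  have hblock : ∀ k < m, IntervalIntegrable K volume (k * π + π / 2) ((k + 1 : ℕ) * π + π / 2) :=
    fun k hk ↦ intervalIntegrable_of_le_of_le hK (by positivity) (by gcongr; simp)
      (by gcongr; exact hk)
  have hsum := intervalIntegral.sum_integral_adjacent_intervals (μ := volume)
    (a := fun k : ℕ ↦ k * π + π / 2) fun k hk ↦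
      (hblock k hk).mul_continuousOn continuous_sin.continuousOn
  have hsign : ∀ k ∈ Finset.range m,
      ∫ x in (k * π + π / 2)..((k + 1 : ℕ) * π + π / 2), K x * sin x =
        -((-1) ^ k * sinBlock K (k + 1)) := fun k hk ↦ by
    have hleft : (k * π + π / 2 : ℝ) = (k + 1 : ℕ) * π - π / 2 := by push_cast; ring
    have hK' := hblock k (Finset.mem_range.mp hk)
    rw [hleft] at hK' ⊢
    rw [integral_mul_sin_eq_sinBlock hK', pow_succ]
    ring
  rw [Finset.sum_congr rfl hsign, Finset.sum_neg_distrib] at hsum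
  simp only [CharP.cast_eq_zero, zero_mul, zero_add] at hsum
  rw [sub_eq_add_neg, hsum, intervalIntegral.integral_add_adjacent_intervals]
  · exact (intervalIntegrable_of_le_of_le hK le_rfl (by positivity) (by linarith)).mul_continuousOn
      continuous_sin.continuousOn
  · exact (intervalIntegrable_of_le_of_le hK (by positivity) (by linarith) le_rfl).mul_continuousOn
      continuous_sin.continuousOn

lemma intervalIntegrable_sinBlock
    (hK : IntervalIntegrable K volume (k * π - π / 2) (k * π + π / 2)) :
    IntervalIntegrable (fun t ↦ (K (k * π + t) - K (k * π - t)) * sin t) volume 0 (π / 2) :=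
  ((intervalIntegrable_comp_const_add hK).sub
    (intervalIntegrable_comp_const_sub hK)).mul_continuousOn continuous_sin.continuousOn

lemma sin_nonneg_of_mem_Icc_zero_pi_div_two {t : ℝ} (ht : t ∈ Icc 0 (π / 2)) : 0 ≤ sin t :=
  sin_nonneg_of_nonneg_of_le_pi ht.1 (by linarith [ht.2, pi_pos])

lemma sinBlock_nonneg (hK : MonotoneOn K (Icc (k * π - π / 2) (k * π + π / 2))) :
    0 ≤ sinBlock K k := by
  refine intervalIntegral.integral_nonneg (by positivity) fun t ht ↦ ?_
  refine mul_nonneg (sub_nonneg.mpr (hK ?_ ?_ ?_)) (sin_nonneg_of_mem_Icc_zero_pi_div_two ht)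
  · constructor <;> linarith [ht.1, ht.2]
  · constructor <;> linarith [ht.1, ht.2]
  · linarith [ht.1]

lemma sinBlock_succ_le (hK : ConcaveOn ℝ (Icc (k * π - π / 2) ((k + 1 : ℕ) * π + π / 2)) K)
    (hint : IntervalIntegrable K volume (k * π - π / 2) ((k + 1 : ℕ) * π + π / 2)) :
    sinBlock K (k + 1) ≤ sinBlock K k := by
  have hpi := pi_pos
  have hsucc : ((k + 1 : ℕ) : ℝ) * π = k * π + π := by push_cast; ring
  rw [hsucc] at hK hint
  refine intervalIntegral.integral_mono_on (by positivity)
    (intervalIntegrable_sinBlock (intervalIntegrable_of_le_of_le hint ?_ ?_ ?_))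
    (intervalIntegrable_sinBlock (intervalIntegrable_of_le_of_le hint ?_ ?_ ?_))
    fun t ht ↦ mul_le_mul_of_nonneg_right ?_ (sin_nonneg_of_mem_Icc_zero_pi_div_two ht)
  any_goals linarith
  have hshift := sub_le_sub_of_concaveOn hK (x := k * π - t) (y := k * π + π - t) (d := 2 * t)
    (by constructor <;> linarith [ht.1, ht.2]) (by constructor <;> linarith [ht.1, ht.2])
    (by linarith) (by linarith [ht.1])
  rw [hsucc]
  convert hshift using 3 <;> ring

lemma sinBlock_one_le (hK : ConcaveOn ℝ (Icc 0 (π + π / 2)) K)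
    (hint : IntervalIntegrable K volume 0 (π + π / 2)) (h0 : 0 ≤ K 0) :
    sinBlock K 1 ≤ 2 * ∫ x in (0 : ℝ)..(π / 2), K x * sin x := by
  have hpi := pi_pos
  rw [← intervalIntegral.integral_const_mul]
  refine intervalIntegral.integral_mono_on (by positivity)
    (intervalIntegrable_sinBlock (intervalIntegrable_of_le_of_le hint ?_ ?_ ?_))
    (((intervalIntegrable_of_le_of_le hint ?_ ?_ ?_).mul_continuousOn
      continuous_sin.continuousOn).const_mul 2) fun t ht ↦ ?_
  any_goals rw [Nat.cast_one]
  any_goals linarith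
  have hfar : K (π + t) - K (π - t) ≤ K (2 * t) - K 0 := by
    have hshift := sub_le_sub_of_concaveOn hK (x := 0) (y := π - t) (d := 2 * t)
      (by constructor <;> linarith) (by constructor <;> linarith [ht.1, ht.2])
      (by linarith [ht.2]) (by linarith [ht.1])
    rwa [zero_add, show π - t + 2 * t = π + t by ring] at hshift
  have hnear : K (2 * t) - K t ≤ K t - K 0 := by
    have hshift := sub_le_sub_of_concaveOn hK (x := 0) (y := t) (d := t)
      (by constructor <;> linarith) (by constructor <;> linarith [ht.1, ht.2]) ht.1 ht.1
    rwa [zero_add, ← two_mul] at hshift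
  rw [← mul_assoc]
  refine mul_le_mul_of_nonneg_right ?_ (sin_nonneg_of_mem_Icc_zero_pi_div_two ht)
  simp only [one_mul]
  linarith


lemma abs_integral_mul_sin_le {m : ℕ} (hconc : ConcaveOn ℝ (Icc 0 (m * π + π / 2)) K)
    (hmono : MonotoneOn K (Icc 0 (m * π + π / 2))) (h0 : 0 ≤ K 0) :
    |∫ x in (0 : ℝ)..(m * π + π / 2), K x * sin x| ≤ ∫ x in (0 : ℝ)..(π / 2), K x * sin x := by
  have hpi := pi_pos
  have hint : IntervalIntegrable K volume 0 (m * π + π / 2) :=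
    MonotoneOn.intervalIntegrable (by rwa [uIcc_of_le (by positivity)])
  have hquarter : 0 ≤ ∫ x in (0 : ℝ)..(π / 2), K x * sin x := by
    refine intervalIntegral.integral_nonneg (by positivity) fun t ht ↦
      mul_nonneg (h0.trans (hmono ?_ ?_ ht.1)) (sin_nonneg_of_mem_Icc_zero_pi_div_two ht)
    · exact ⟨le_rfl, by positivity⟩
    · exact ⟨ht.1, ht.2.trans (le_add_of_nonneg_left (by positivity))⟩
  rw [integral_mul_sin_eq_sub_sum_sinBlock hint]
  rcases m with - | m
  · simp [abs_of_nonneg hquarter]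
  have hle : ∀ {k : ℕ}, k ≤ m + 1 → (k : ℝ) * π + π / 2 ≤ (m + 1 : ℕ) * π + π / 2 := fun hk ↦ by
    gcongr
  have hge : ∀ {k : ℕ}, 1 ≤ k → 0 ≤ (k : ℝ) * π - π / 2 := fun {k} hk ↦ by
    have : (1 : ℝ) ≤ k := by exact_mod_cast hk
    nlinarith
  have hdecr : ∀ k < m, sinBlock K (k + 1 + 1) ≤ sinBlock K (k + 1) := fun k hk ↦ by
    have hk' := hge (k := k + 1) (by omega)
    refine sinBlock_succ_le (hconc.subset (Icc_subset_Icc hk' (hle (by omega)))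
      (convex_Icc _ _)) (intervalIntegrable_of_le_of_le hint hk' ?_ (hle (by omega)))
    push_cast
    linarith
  have hlast : 0 ≤ sinBlock K (m + 1) :=
    sinBlock_nonneg (hmono.mono (Icc_subset_Icc (hge (by omega)) le_rfl))
  have hfirst : sinBlock K 1 ≤ 2 * ∫ x in (0 : ℝ)..(π / 2), K x * sin x := by
    have h1 := hle (k := 1) (by omega)
    rw [Nat.cast_one, one_mul] at h1
    exact sinBlock_one_le (hconc.subset (Icc_subset_Icc le_rfl h1) (convex_Icc _ _))
      (intervalIntegrable_of_le_of_le hint le_rfl (by positivity) h1) h0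
  have hsum := alternating_sum_mem_Icc (D := fun k ↦ sinBlock K (k + 1)) hdecr hlast
  rw [abs_le]
  constructor <;> linarith [hsum.1, hsum.2]

lemma abs_integral_mul_cos_le {f : ℝ → ℝ} {a ω : ℝ} {m : ℕ} (hω : 0 < ω)
    (ha : ω * a = m * π + π / 2) (hconc : ConcaveOn ℝ (Icc 0 a) f)
    (hanti : AntitoneOn f (Icc 0 a)) (h0 : 0 ≤ f a) :
    |∫ x in (0 : ℝ)..a, f x * cos (ω * x)| ≤
      ω⁻¹ * ∫ θ in (0 : ℝ)..(π / 2), f (a - θ / ω) * sin θ := by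
  have haω : a - (m * π + π / 2) / ω = 0 := by rw [← ha]; field_simp; ring
  have hmaps : MapsTo (fun θ ↦ a - θ / ω) (Icc 0 (m * π + π / 2)) (Icc 0 a) := fun θ hθ ↦ by
    have hle : θ / ω ≤ (m * π + π / 2) / ω := by gcongr; exact hθ.2
    have hnonneg : 0 ≤ θ / ω := div_nonneg hθ.1 hω.le
    constructor <;> linarith
  have hcos : ∀ θ, cos (ω * (a - θ / ω)) = (-1) ^ m * sin θ := fun θ ↦ by
    rw [show ω * (a - θ / ω) = π / 2 - (θ - m * π) by rw [mul_sub, ha]; field_simp; ring,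
      cos_pi_div_two_sub, sin_sub_nat_mul_pi]
  have hsubst : ∫ x in (0 : ℝ)..a, f x * cos (ω * x) =
      (-1) ^ m * (ω⁻¹ * ∫ θ in (0 : ℝ)..(m * π + π / 2), f (a - θ / ω) * sin θ) := by
    have h := intervalIntegral.inv_smul_integral_comp_sub_div (fun x ↦ f x * cos (ω * x))
      (a := 0) (b := m * π + π / 2) ω a
    rw [haω, zero_div, sub_zero] at h
    simp only [← h, smul_eq_mul, hcos, mul_left_comm _ ((-1 : ℝ) ^ m),
      intervalIntegral.integral_const_mul]
  rw [hsubst, abs_mul, abs_neg_one_pow, one_mul, abs_mul, abs_of_pos (inv_pos.mpr hω)]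
  gcongr
  refine abs_integral_mul_sin_le (concaveOn_comp_const_sub_div hconc (convex_Icc _ _) hmaps)
    (fun θ hθ η hη hle ↦ hanti (hmaps hη) (hmaps hθ) ?_) ?_
  · simp only
    gcongr
  · simpa using h0

end Oscillation

lemma integral_one_add_mul_sub_one_mul_sin (r : ℝ) :
    ∫ θ in (0 : ℝ)..(π / 2), (1 + r * (θ - 1)) * sin θ = 1 := by
  have hderiv : ∀ θ ∈ uIcc 0 (π / 2), HasDerivAt
      (fun θ ↦ r * sin θ - (1 + r * (θ - 1)) * cos θ) ((1 + r * (θ - 1)) * sin θ) θ := fun θ _ ↦ by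
    have hlin : HasDerivAt (fun θ ↦ 1 + r * (θ - 1)) r θ := by
      simpa using (((hasDerivAt_id θ).sub_const 1).const_mul r).const_add 1
    refine (((hasDerivAt_sin θ).const_mul r).sub (hlin.mul (hasDerivAt_cos θ))).congr_deriv ?_
    ring
  rw [intervalIntegral.integral_eq_sub_of_hasDerivAt hderiv
    (Continuous.intervalIntegrable (by fun_prop) _ _)]
  simp

lemma integral_rpow_mul_sin_le_one {r : ℝ} (hr0 : 0 ≤ r) (hr1 : r ≤ 1) :
    ∫ θ in (0 : ℝ)..(π / 2), θ ^ r * sin θ ≤ 1 := by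
  rw [← integral_one_add_mul_sub_one_mul_sin r]
  refine intervalIntegral.integral_mono_on (by positivity) ?_ ?_ fun θ hθ ↦ ?_
  · exact ((continuous_id.rpow_const fun _ ↦ .inr hr0).mul continuous_sin).intervalIntegrable _ _
  · exact Continuous.intervalIntegrable (by fun_prop) _ _
  · have hbernoulli : (1 + (θ - 1)) ^ r ≤ 1 + r * (θ - 1) :=
      rpow_one_add_le_one_add_mul_self (by linarith [hθ.1]) hr0 hr1
    rw [add_sub_cancel] at hbernoulli
    exact mul_le_mul_of_nonneg_right hbernoulli (sin_nonneg_of_mem_Icc_zero_pi_div_two hθ)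

lemma abs_integral_mul_cos_le_rpow {f : ℝ → ℝ} {a ω C r : ℝ} {m : ℕ} (hω : 0 < ω)
    (ha : ω * a = m * π + π / 2) (hconc : ConcaveOn ℝ (Icc 0 a) f)
    (hanti : AntitoneOn f (Icc 0 a)) (h0 : 0 ≤ f a) (hC : 0 ≤ C) (hr0 : 0 ≤ r) (hr1 : r ≤ 1)
    (hf : ∀ x ∈ Icc 0 a, f x ≤ (C * (a - x)) ^ r) :
    |∫ x in (0 : ℝ)..a, f x * cos (ω * x)| ≤ ω⁻¹ * (C / ω) ^ r := by
  have hmem : ∀ θ ∈ Icc 0 (π / 2), a - θ / ω ∈ Icc 0 a := fun θ hθ ↦ by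
    have hle : θ / ω ≤ a := by
      rw [div_le_iff₀' hω, ha]
      exact hθ.2.trans (le_add_of_nonneg_left (by positivity))
    exact ⟨sub_nonneg.mpr hle, sub_le_self _ (div_nonneg hθ.1 hω.le)⟩
  have hint : IntervalIntegrable (fun θ ↦ f (a - θ / ω)) volume 0 (π / 2) := by
    refine MonotoneOn.intervalIntegrable fun θ hθ η hη hle ↦ ?_
    rw [uIcc_of_le (by positivity)] at hθ hη
    exact hanti (hmem η hη) (hmem θ hθ) (by gcongr)
  refine (abs_integral_mul_cos_le hω ha hconc hanti h0).trans
    (mul_le_mul_of_nonneg_left ?_ (inv_nonneg.mpr hω.le))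
  calc ∫ θ in (0 : ℝ)..(π / 2), f (a - θ / ω) * sin θ
      ≤ ∫ θ in (0 : ℝ)..(π / 2), (C / ω) ^ r * (θ ^ r * sin θ) := by
        refine intervalIntegral.integral_mono_on (by positivity)
          (hint.mul_continuousOn continuous_sin.continuousOn) ?_ fun θ hθ ↦ ?_
        · exact (((continuous_id.rpow_const fun _ ↦ .inr hr0).mul
            continuous_sin).intervalIntegrable _ _).const_mul _
        · have hfθ := hf _ (hmem θ hθ)
          rw [sub_sub_cancel, mul_div_left_comm, mul_comm, mul_rpow (by positivity) hθ.1] at hfθ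
          rw [← mul_assoc]
          exact mul_le_mul_of_nonneg_right hfθ (sin_nonneg_of_mem_Icc_zero_pi_div_two hθ)
    _ = (C / ω) ^ r * ∫ θ in (0 : ℝ)..(π / 2), θ ^ r * sin θ := by
        rw [intervalIntegral.integral_const_mul]
    _ ≤ (C / ω) ^ r :=
        mul_le_of_le_one_right (by positivity) (integral_rpow_mul_sin_le_one hr0 hr1)

lemma rpow_one_div_lt_of_one_lt_mul {q x c : ℝ} (hq : 1 < q) (hx : 0 ≤ x) (hxc : 1 < x * c) :
    x ^ (1 / q) < x / q * (1 + c * (q - 1)) := calc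
  x ^ (1 / q) = (1 + (x - 1)) ^ (1 / q) := by rw [add_sub_cancel]
  _ ≤ 1 + 1 / q * (x - 1) := rpow_one_add_le_one_add_mul_self (by linarith) (by positivity)
    ((div_le_one (by positivity)).mpr hq.le)
  _ = (x + 1 * (q - 1)) / q := by field_simp; ring
  _ < (x + x * c * (q - 1)) / q := by gcongr
  _ = x / q * (1 + c * (q - 1)) := by ring

section BetaIntegral

lemma integral_rpow_mul_one_sub_rpow {a b : ℝ} (ha : 0 < a) (hb : 0 < b) :
    ∫ y in (0 : ℝ)..1, y ^ (a - 1) * (1 - y) ^ (b - 1) =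
      Gamma a * Gamma b / Gamma (a + b) := by
  have hcast : Complex.betaIntegral a b =
      ((∫ y in (0 : ℝ)..1, y ^ (a - 1) * (1 - y) ^ (b - 1) : ℝ) : ℂ) := by
    rw [Complex.betaIntegral, ← intervalIntegral.integral_ofReal]
    refine intervalIntegral.integral_congr fun y hy ↦ ?_
    rw [uIcc_of_le zero_le_one] at hy
    simp [Complex.ofReal_cpow hy.1, Complex.ofReal_cpow (sub_nonneg.mpr hy.2)]
  have hbeta := ProbabilityTheory.beta_eq_betaIntegralReal a b ha hb
  rwa [hcast, Complex.ofReal_re, ProbabilityTheory.beta, eq_comm] at hbeta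

lemma integral_one_sub_rpow_rpow {p c : ℝ} (hp : 0 < p) :
    p * ∫ t in (0 : ℝ)..1, (1 - t ^ p) ^ c =
      ∫ y in (0 : ℝ)..1, y ^ (1 / p - 1) * (1 - y) ^ c := by
  have hsubst := intervalIntegral.integral_deriv_smul_comp_of_deriv_nonneg (a := 0) (b := 1)
    (f := fun t : ℝ ↦ t ^ p) (f' := fun t ↦ p * t ^ (p - 1))
    (g := fun y ↦ y ^ (1 / p - 1) * (1 - y) ^ c)
    (continuousOn_id.rpow_const fun _ _ ↦ .inr hp.le)
    (fun t ht ↦ hasDerivAt_rpow_const (.inl (by simpa using ht.1.ne')))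
    (fun t ht ↦ mul_nonneg hp.le (rpow_nonneg (by simpa using ht.1.le) _))
  rw [zero_rpow hp.ne', one_rpow] at hsubst
  rw [← hsubst, ← intervalIntegral.integral_const_mul]
  refine intervalIntegral.integral_congr_Ioo_of_le zero_le_one fun t ht ↦ ?_
  have hcancel : t ^ (p - 1) * (t ^ p) ^ (1 / p - 1) = 1 := by
    rw [← rpow_mul ht.1.le, ← rpow_add ht.1,
      show p - 1 + p * (1 / p - 1) = 0 by field_simp; ring, rpow_zero]
  simp only [Function.comp_apply, smul_eq_mul]
  linear_combination (-p * (1 - t ^ p) ^ c) * hcancel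

end BetaIntegral

section ArcSine

variable {p x y : ℝ}

lemma intervalIntegrable_one_sub_rpow (hp : 1 < p) (hx : x ∈ Icc 0 1) (hy : y ∈ Icc 0 1) :
    IntervalIntegrable (fun t : ℝ ↦ (1 - t ^ p) ^ (-(1 / p))) volume x y := by
  have hp1 : 1 / p < 1 := (div_lt_one (by positivity)).mpr hp
  have hlin : IntervalIntegrable (fun t : ℝ ↦ (1 - t) ^ (-(1 / p))) volume 0 1 := by
    simpa using ((intervalIntegral.intervalIntegrable_rpow' (a := 0) (b := 1)
      (by linarith : -1 < -(1 / p))).comp_sub_left 1).symm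
  have hfull : IntervalIntegrable (fun t : ℝ ↦ (1 - t ^ p) ^ (-(1 / p))) volume 0 1 := by
    refine hlin.mono_fun (Measurable.aestronglyMeasurable (by fun_prop)) ?_
    rw [uIoc_of_le zero_le_one]
    filter_upwards [ae_restrict_mem measurableSet_Ioc] with t ht
    have htp : t ^ p ≤ t := rpow_le_self_of_le_one ht.1.le ht.2 hp.le
    rw [norm_of_nonneg (rpow_nonneg (by linarith [ht.2]) _),
      norm_of_nonneg (rpow_nonneg (by linarith [ht.2]) _)]
    rcases ht.2.eq_or_lt with rfl | ht1
    · simp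
    · exact rpow_le_rpow_of_nonpos (by linarith) (by linarith)
        (neg_nonpos.mpr (by positivity))
  exact hfull.mono_set (by rw [uIcc_of_le zero_le_one]; exact uIcc_subset_Icc hx hy)

lemma fp_zero : Fp p 0 = 0 := by simp [Fp]

lemma fp_sub_fp (hp : 1 < p) (hx : x ∈ Icc 0 1) (hy : y ∈ Icc 0 1) :
    Fp p y - Fp p x = ∫ t in x..y, (1 - t ^ p) ^ (-(1 / p)) :=
  intervalIntegral.integral_interval_sub_left
    (intervalIntegrable_one_sub_rpow hp (left_mem_Icc.mpr zero_le_one) hy)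
    (intervalIntegrable_one_sub_rpow hp (left_mem_Icc.mpr zero_le_one) hx)

lemma sub_le_fp_sub_fp (hp : 1 < p) (hx : 0 ≤ x) (hxy : x ≤ y) (hy : y ≤ 1) :
    y - x ≤ Fp p y - Fp p x := by
  have hmx : x ∈ Icc 0 1 := ⟨hx, hxy.trans hy⟩
  have hmy : y ∈ Icc 0 1 := ⟨hx.trans hxy, hy⟩
  rw [fp_sub_fp hp hmx hmy, ← integral_one]
  refine intervalIntegral.integral_mono_on_of_le_Ioo hxy (by simp)
    (intervalIntegrable_one_sub_rpow hp hmx hmy) fun t ht ↦ ?_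
  have ht0 : 0 ≤ t := hx.trans ht.1.le
  have htp : t ^ p < 1 := rpow_lt_one ht0 (ht.2.trans_le hy) (by linarith)
  exact one_le_rpow_of_pos_of_le_one_of_nonpos (sub_pos.mpr htp)
    (sub_le_self _ (rpow_nonneg ht0 _)) (neg_nonpos.mpr (by positivity))

lemma strictMonoOn_fp (hp : 1 < p) : StrictMonoOn (Fp p) (Icc 0 1) := fun x hx y hy hxy ↦ by
  linarith [sub_le_fp_sub_fp hp hx.1 hxy.le hy.2]

lemma continuousOn_fp (hp : 1 < p) : ContinuousOn (Fp p) (Icc 0 1) := by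
  rw [← uIcc_of_le zero_le_one]
  exact intervalIntegral.continuousOn_primitive_interval'
    (intervalIntegrable_one_sub_rpow hp (by simp) (by simp)) left_mem_uIcc

lemma image_fp_Icc (hp : 1 < p) : Fp p '' Icc 0 1 = Icc 0 (Fp p 1) := by
  rw [(continuousOn_fp hp).image_Icc_of_monotoneOn zero_le_one (strictMonoOn_fp hp).monotoneOn,
    fp_zero]

lemma hasDerivAt_fp (hp : 1 < p) (hy : y ∈ Ioo 0 1) :
    HasDerivAt (Fp p) ((1 - y ^ p) ^ (-(1 / p))) y := by
  have hyp : y ^ p < 1 := rpow_lt_one hy.1.le hy.2 (by linarith)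
  refine intervalIntegral.integral_hasDerivAt_right
    (intervalIntegrable_one_sub_rpow hp (by simp) (Ioo_subset_Icc_self hy))
    (Measurable.stronglyMeasurable (by fun_prop)).stronglyMeasurableAtFilter ?_
  exact (continuousAt_const.sub (continuousAt_rpow_const _ _ (.inl hy.1.ne'))).rpow_const
    (.inl (sub_pos.mpr hyp).ne')

lemma one_le_fp_one (hp : 1 < p) : 1 ≤ Fp p 1 := by
  have h := sub_le_fp_sub_fp hp le_rfl zero_le_one le_rfl
  rwa [fp_zero, sub_zero, sub_zero] at h

lemma pip_half : pip p / 2 = Fp p 1 := by rw [pip]; ring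

lemma two_le_pip (hp : 1 < p) : 2 ≤ pip p := by
  rw [pip]
  linarith [one_le_fp_one hp]

lemma one_sub_rpow_rpow_le (hp : 1 < p) (hy : y ∈ Icc 0 1) :
    (1 - y ^ p) ^ (1 - 1 / p) ≤ (p - 1) * (Fp p 1 - Fp p y) := by
  have hp1 : 1 / p < 1 := (div_lt_one (by positivity)).mpr hp
  set G : ℝ → ℝ := fun y ↦ (1 - y ^ p) ^ (1 - 1 / p) + (p - 1) * Fp p y with hG
  have hderiv : ∀ y ∈ Ioo (0 : ℝ) 1,
      HasDerivAt G ((p - 1) * (1 - y ^ (p - 1)) * (1 - y ^ p) ^ (-(1 / p))) y := fun y hy ↦ by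
    have hyp : y ^ p < 1 := rpow_lt_one hy.1.le hy.2 (by linarith)
    have hpow := ((hasDerivAt_rpow_const (p := p) (.inl hy.1.ne')).const_sub 1).rpow_const
      (p := 1 - 1 / p) (.inl (sub_pos.mpr hyp).ne')
    refine (hpow.add ((hasDerivAt_fp hp hy).const_mul (p - 1))).congr_deriv ?_
    rw [show 1 - 1 / p - 1 = -(1 / p) by ring]
    field_simp
    ring
  have hmono : MonotoneOn G (Icc 0 1) := by
    refine monotoneOn_of_hasDerivWithinAt_nonneg (convex_Icc 0 1) ?_
      (fun y hy ↦ (hderiv y (by rwa [interior_Icc] at hy)).hasDerivWithinAt) fun y hy ↦ ?_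
    · refine .add (.rpow_const ?_ fun _ _ ↦ .inr (by linarith)) ((continuousOn_fp hp).const_mul _)
      exact continuousOn_const.sub (continuousOn_id.rpow_const fun _ _ ↦ .inr (by positivity))
    · rw [interior_Icc] at hy
      have hyp : y ^ p ≤ 1 := rpow_le_one hy.1.le hy.2.le (by positivity)
      have hyp' : y ^ (p - 1) ≤ 1 := rpow_le_one hy.1.le hy.2.le (by linarith)
      exact mul_nonneg (mul_nonneg (by linarith) (sub_nonneg.mpr hyp'))
        (rpow_nonneg (sub_nonneg.mpr hyp) _)
  have hle : G y ≤ G 1 := hmono hy (right_mem_Icc.mpr zero_le_one) hy.2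
  simp only [hG, one_rpow, sub_self, zero_rpow (by linarith : 1 - 1 / p ≠ 0)] at hle
  linarith

lemma pip_eq (hp : 1 < p) : pip p = 2 * π / (p * sin (π / p)) := by
  have hp1 : 1 / p < 1 := (div_lt_one (by positivity)).mpr hp
  have hbeta : p * Fp p 1 = π / sin (π / p) := calc
    p * Fp p 1 = ∫ y in (0 : ℝ)..1, y ^ (1 / p - 1) * (1 - y) ^ (1 - 1 / p - 1) := by
      rw [Fp, integral_one_sub_rpow_rpow (by positivity), show 1 - 1 / p - 1 = -(1 / p) by ring]
    _ = Gamma (1 / p) * Gamma (1 - 1 / p) := by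
      rw [integral_rpow_mul_one_sub_rpow (by positivity) (by linarith), add_sub_cancel, Gamma_one,
        div_one]
    _ = π / sin (π / p) := by rw [Gamma_mul_Gamma_one_sub, mul_one_div]
  rw [pip, mul_comm p, ← div_div, mul_div_assoc 2, ← hbeta]
  field_simp

lemma pip_conjExponent (hp : 1 < p) : pip (p / (p - 1)) = (p - 1) * pip p := by
  have hp1 : 0 < p - 1 := sub_pos.mpr hp
  have hsin : sin (π / (p / (p - 1))) = sin (π / p) := by
    rw [← sin_pi_sub]
    congr 1
    field_simp
    ring
  rw [pip_eq ((one_lt_div hp1).mpr (by linarith)), pip_eq hp, hsin]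
  field_simp

end ArcSine

section Inverse

lemma strictMonoOn_image_of_leftInvOn {α β : Type*} [LinearOrder α] [Preorder β] {f : α → β}
    {g : β → α} {t : Set α} (hf : StrictMonoOn f t) (hg : LeftInvOn g f t) :
    StrictMonoOn g (f '' t) := by
  rintro _ ⟨x, hx, rfl⟩ _ ⟨y, hy, rfl⟩ hxy
  rw [hg hx, hg hy]
  exact (hf.lt_iff_lt hx hy).mp hxy

lemma continuousOn_image_of_leftInvOn {α β : Type*} [TopologicalSpace α] [TopologicalSpace β]
    [T2Space β] {f : α → β} {g : β → α} {t : Set α} (ht : IsCompact t) (hf : ContinuousOn f t)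
    (hg : LeftInvOn g f t) : ContinuousOn g (f '' t) := by
  refine continuousOn_iff_isClosed.mpr fun u hu ↦
    ⟨f '' (u ∩ t), ((ht.inter_left hu).image_of_continuousOn
      (hf.mono inter_subset_right)).isClosed, ?_⟩
  rw [hg.image_inter', inter_assoc, inter_self]

end Inverse

section Sine

/-- The generalized cosine `cos_p = (1 - sin_p ^ p) ^ (1 / p)` of `s = sin_p`. It is the
derivative of `s` where `s` inverts `F_p`, and is only used there: on the first quarter period
`[0, π_p / 2]`. -/
noncomputable def cosp (p : ℝ) (s : ℝ → ℝ) (x : ℝ) : ℝ := (1 - s x ^ p) ^ (1 / p)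

variable {p x : ℝ} {s : ℝ → ℝ}

lemma strictMonoOn_of_leftInvOn_fp (hp : 1 < p) (hs : LeftInvOn s (Fp p) (Icc 0 1)) :
    StrictMonoOn s (Icc 0 (Fp p 1)) := by
  rw [← image_fp_Icc hp]
  exact strictMonoOn_image_of_leftInvOn (strictMonoOn_fp hp) hs

lemma continuousOn_of_leftInvOn_fp (hp : 1 < p) (hs : LeftInvOn s (Fp p) (Icc 0 1)) :
    ContinuousOn s (Icc 0 (Fp p 1)) := by
  rw [← image_fp_Icc hp]
  exact continuousOn_image_of_leftInvOn isCompact_Icc (continuousOn_fp hp) hs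

lemma rightInvOn_of_leftInvOn_fp (hp : 1 < p) (hs : LeftInvOn s (Fp p) (Icc 0 1)) :
    RightInvOn s (Fp p) (Icc 0 (Fp p 1)) := by
  rw [← image_fp_Icc hp]
  exact hs.rightInvOn_image

lemma mapsTo_Icc_of_leftInvOn_fp (hp : 1 < p) (hs : LeftInvOn s (Fp p) (Icc 0 1)) :
    MapsTo s (Icc 0 (Fp p 1)) (Icc 0 1) := by
  rw [← image_fp_Icc hp]
  rintro _ ⟨y, hy, rfl⟩
  rwa [hs hy]

lemma mapsTo_Ioo_of_leftInvOn_fp (hp : 1 < p) (hs : LeftInvOn s (Fp p) (Icc 0 1)) :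
    MapsTo s (Ioo 0 (Fp p 1)) (Ioo 0 1) := fun x hx ↦ by
  have hmono := strictMonoOn_of_leftInvOn_fp hp hs
  have hx' := Ioo_subset_Icc_self hx
  have hle := hx'.1.trans hx'.2
  have h0 : s 0 = 0 := by simpa [fp_zero] using hs (left_mem_Icc.mpr zero_le_one)
  have h1 : s (Fp p 1) = 1 := hs (right_mem_Icc.mpr zero_le_one)
  exact ⟨h0 ▸ hmono (left_mem_Icc.mpr hle) hx' hx.1, h1 ▸ hmono hx' (right_mem_Icc.mpr hle) hx.2⟩

lemma one_sub_rpow_pos_of_leftInvOn_fp (hp : 1 < p) (hs : LeftInvOn s (Fp p) (Icc 0 1))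
    (hx : x ∈ Ioo 0 (Fp p 1)) : 0 < 1 - s x ^ p := by
  have hsx := mapsTo_Ioo_of_leftInvOn_fp hp hs hx
  exact sub_pos.mpr (rpow_lt_one hsx.1.le hsx.2 (by positivity))

lemma hasDerivAt_of_leftInvOn_fp (hp : 1 < p) (hs : LeftInvOn s (Fp p) (Icc 0 1))
    (hx : x ∈ Ioo 0 (Fp p 1)) : HasDerivAt s (cosp p s x) x := by
  have hpos := one_sub_rpow_pos_of_leftInvOn_fp hp hs hx
  have hnhds : Icc 0 (Fp p 1) ∈ nhds x := Icc_mem_nhds hx.1 hx.2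
  have hinv := HasDerivAt.of_local_left_inverse
    ((continuousOn_of_leftInvOn_fp hp hs).continuousAt hnhds)
    (hasDerivAt_fp hp (mapsTo_Ioo_of_leftInvOn_fp hp hs hx)) (rpow_pos_of_pos hpos _).ne'
    (Filter.mem_of_superset hnhds (rightInvOn_of_leftInvOn_fp hp hs))
  rwa [← rpow_neg hpos.le, neg_neg] at hinv

lemma cosp_nonneg (hp : 1 < p) (hs : LeftInvOn s (Fp p) (Icc 0 1)) (hx : x ∈ Icc 0 (Fp p 1)) :
    0 ≤ cosp p s x := by
  have hsx := mapsTo_Icc_of_leftInvOn_fp hp hs hx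
  exact rpow_nonneg (sub_nonneg.mpr (rpow_le_one hsx.1 hsx.2 (by positivity))) _

lemma continuousOn_cosp (hp : 1 < p) (hs : LeftInvOn s (Fp p) (Icc 0 1)) :
    ContinuousOn (cosp p s) (Icc 0 (Fp p 1)) := by
  refine .rpow_const (continuousOn_const.sub ?_) fun _ _ ↦ .inr (by positivity)
  exact (continuousOn_of_leftInvOn_fp hp hs).rpow_const fun _ _ ↦ .inr (by positivity)

lemma antitoneOn_cosp (hp : 1 < p) (hs : LeftInvOn s (Fp p) (Icc 0 1)) :
    AntitoneOn (cosp p s) (Icc 0 (Fp p 1)) := fun x hx y hy hxy ↦ by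
  have hsx := mapsTo_Icc_of_leftInvOn_fp hp hs hx
  have hsy := mapsTo_Icc_of_leftInvOn_fp hp hs hy
  refine rpow_le_rpow (sub_nonneg.mpr (rpow_le_one hsy.1 hsy.2 (by positivity)))
    (sub_le_sub_left (rpow_le_rpow hsx.1 ?_ (by positivity)) 1) (by positivity)
  exact (strictMonoOn_of_leftInvOn_fp hp hs).monotoneOn hx hy hxy

lemma hasDerivAt_cosp (hp : 1 < p) (hs : LeftInvOn s (Fp p) (Icc 0 1))
    (hx : x ∈ Ioo 0 (Fp p 1)) :
    HasDerivAt (cosp p s) (-(s x ^ (p - 1) * (1 - s x ^ p) ^ (2 / p - 1))) x := by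
  have hpos := one_sub_rpow_pos_of_leftInvOn_fp hp hs hx
  have hpow := (((hasDerivAt_of_leftInvOn_fp hp hs hx).rpow_const (p := p)
    (.inl (mapsTo_Ioo_of_leftInvOn_fp hp hs hx).1.ne')).const_sub 1).rpow_const
    (p := 1 / p) (.inl hpos.ne')
  refine hpow.congr_deriv ?_
  rw [cosp, show 2 / p - 1 = 1 / p + (1 / p - 1) by ring, rpow_add hpos]
  field_simp

lemma concaveOn_cosp (hp : 2 ≤ p) (hs : LeftInvOn s (Fp p) (Icc 0 1)) :
    ConcaveOn ℝ (Icc 0 (Fp p 1)) (cosp p s) := by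
  have hp1 : 1 < p := by linarith
  refine AntitoneOn.concaveOn_of_deriv (convex_Icc _ _) (continuousOn_cosp hp1 hs) ?_ ?_ <;>
    rw [interior_Icc]
  · exact fun x hx ↦ (hasDerivAt_cosp hp1 hs hx).differentiableAt.differentiableWithinAt
  intro x hx y hy hxy
  have hsx := mapsTo_Ioo_of_leftInvOn_fp hp1 hs hx
  have hsy := mapsTo_Ioo_of_leftInvOn_fp hp1 hs hy
  have hsxy : s x ≤ s y := (strictMonoOn_of_leftInvOn_fp hp1 hs).monotoneOn
    (Ioo_subset_Icc_self hx) (Ioo_subset_Icc_self hy) hxy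
  rw [(hasDerivAt_cosp hp1 hs hx).deriv, (hasDerivAt_cosp hp1 hs hy).deriv, neg_le_neg_iff]
  refine mul_le_mul (rpow_le_rpow hsx.1.le hsxy (by linarith)) ?_
    (rpow_nonneg (one_sub_rpow_pos_of_leftInvOn_fp hp1 hs hx).le _) (rpow_nonneg hsy.1.le _)
  exact rpow_le_rpow_of_nonpos (one_sub_rpow_pos_of_leftInvOn_fp hp1 hs hy)
    (sub_le_sub_left (rpow_le_rpow hsx.1.le hsxy (by positivity)) 1)
    (sub_nonpos.mpr ((div_le_one (by positivity)).mpr hp))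

lemma cosp_le_rpow (hp : 1 < p) (hs : LeftInvOn s (Fp p) (Icc 0 1)) (hx : x ∈ Icc 0 (Fp p 1)) :
    cosp p s x ≤ ((p - 1) * (Fp p 1 - x)) ^ (1 / (p - 1)) := by
  have hp1 : 0 < p - 1 := sub_pos.mpr hp
  have hsx := mapsTo_Icc_of_leftInvOn_fp hp hs hx
  have hnonneg : 0 ≤ 1 - s x ^ p := sub_nonneg.mpr (rpow_le_one hsx.1 hsx.2 (by positivity))
  have hle := one_sub_rpow_rpow_le hp hsx
  rw [rightInvOn_of_leftInvOn_fp hp hs hx] at hle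
  calc cosp p s x = ((1 - s x ^ p) ^ (1 - 1 / p)) ^ (1 / (p - 1)) := by
        rw [cosp, ← rpow_mul hnonneg]
        congr 1
        field_simp
    _ ≤ ((p - 1) * (Fp p 1 - x)) ^ (1 / (p - 1)) :=
        rpow_le_rpow (rpow_nonneg hnonneg _) hle (by positivity)

end Sine

section FourierCoefficient

variable {p : ℝ} {s : ℝ → ℝ} {j : ℕ}

lemma abs_integral_cosp_mul_cos_le {ω : ℝ} {m : ℕ} (hp : 2 ≤ p)
    (hs : LeftInvOn s (Fp p) (Icc 0 1)) (hω : 0 < ω) (hm : ω * Fp p 1 = m * π + π / 2) :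
    |∫ u in (0 : ℝ)..(Fp p 1), cosp p s u * cos (ω * u)| ≤
      ω⁻¹ * ((p - 1) / ω) ^ (1 / (p - 1)) := by
  have hp1 : 1 < p := by linarith
  refine abs_integral_mul_cos_le_rpow hω hm (concaveOn_cosp hp hs) (antitoneOn_cosp hp1 hs)
    (cosp_nonneg hp1 hs (right_mem_Icc.mpr (by linarith [one_le_fp_one hp1]))) (by linarith)
    (one_div_nonneg.mpr (by linarith)) ((div_le_one (by linarith)).mpr (by linarith))
    fun x hx ↦ cosp_le_rpow hp1 hs hx

lemma abs_integral_deriv_mul_cos_le {ω : ℝ} (hp : 2 ≤ p) (hs : LeftInvOn s (Fp p) (Icc 0 1))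
    (hsymm : ∀ x, s (pip p - x) = s x) (hω : 0 < ω) (hj : ω * pip p = j * π) :
    |∫ u in (0 : ℝ)..(pip p), deriv s u * cos (ω * u)| ≤
      2 * (ω⁻¹ * ((p - 1) / ω) ^ (1 / (p - 1))) := by
  have hp1 : 1 < p := by linarith
  have hrefl : ∀ u, deriv s (pip p - u) * cos (ω * (pip p - u)) =
      -(-1) ^ j * (deriv s u * cos (ω * u)) := fun u ↦ by
    rw [deriv_const_sub_eq_neg hsymm, mul_sub, hj, cos_nat_mul_pi_sub]
    ring
  rcases j.even_or_odd with hj' | ⟨m, rfl⟩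
  · rw [integral_eq_zero_of_comp_sub_eq_neg fun u ↦ by rw [hrefl, hj'.neg_one_pow, neg_one_mul],
      abs_zero]
    have : 0 ≤ p - 1 := by linarith
    positivity
  · have hm : ω * Fp p 1 = m * π + π / 2 := by
      rw [← pip_half, mul_div_assoc', hj]
      push_cast
      ring
    have hcosp : ∫ u in (0 : ℝ)..(Fp p 1), deriv s u * cos (ω * u) =
        ∫ u in (0 : ℝ)..(Fp p 1), cosp p s u * cos (ω * u) :=
      intervalIntegral.integral_congr_Ioo_of_le (by linarith [one_le_fp_one hp1]) fun u hu ↦ by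
        simp only [(hasDerivAt_of_leftInvOn_fp hp1 hs hu).deriv]
    rw [integral_eq_two_smul_of_comp_sub_eq fun u ↦ by
      rw [hrefl, (odd_two_mul_add_one m).neg_one_pow, neg_neg, one_mul], pip_half, hcosp,
      smul_eq_mul, abs_mul, abs_two]
    gcongr
    exact abs_integral_cosp_mul_cos_le hp hs hω hm

lemma abs_fourier_coeff_le (hp : 2 ≤ p) (hs : LeftInvOn s (Fp p) (Icc 0 1))
    (hsymm : ∀ x, s (pip p - x) = s x) (hj : 0 < j) :
    |2 * ∫ x in (0 : ℝ)..1, deriv s (pip p * x) * cos (j * π * x)| ≤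
      4 / π * (pip (p / (p - 1)) / π) ^ (1 / (p - 1)) * (j : ℝ) ^ (-(p / (p - 1))) := by
  have hp1 : 0 < p - 1 := by linarith
  have hj' : (0 : ℝ) < j := Nat.cast_pos.mpr hj
  have hpip : 0 < pip p := by linarith [two_le_pip (p := p) (by linarith)]
  set ω := j * π / pip p with hω
  have hscale : ∫ x in (0 : ℝ)..1, deriv s (pip p * x) * cos (j * π * x) =
      (pip p)⁻¹ * ∫ u in (0 : ℝ)..(pip p), deriv s u * cos (ω * u) := by
    have hsubst := intervalIntegral.integral_comp_mul_left (a := 0) (b := 1)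
      (fun u ↦ deriv s u * cos (ω * u)) hpip.ne'
    rw [mul_zero, mul_one, smul_eq_mul] at hsubst
    rw [← hsubst]
    simp only [← mul_assoc, hω, div_mul_cancel₀ _ hpip.ne']
  have hexp : (j : ℝ) ^ (-(p / (p - 1))) = (j : ℝ)⁻¹ * ((j : ℝ)⁻¹) ^ (1 / (p - 1)) := by
    rw [inv_rpow hj'.le, ← rpow_neg_one, ← rpow_neg hj'.le, ← rpow_add hj']
    congr 1
    field_simp
    ring
  calc |2 * ∫ x in (0 : ℝ)..1, deriv s (pip p * x) * cos (j * π * x)|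
      = 2 * (pip p)⁻¹ * |∫ u in (0 : ℝ)..(pip p), deriv s u * cos (ω * u)| := by
        rw [hscale, ← mul_assoc, abs_mul, abs_of_pos (by positivity)]
    _ ≤ 2 * (pip p)⁻¹ * (2 * (ω⁻¹ * ((p - 1) / ω) ^ (1 / (p - 1)))) := by
        gcongr
        exact abs_integral_deriv_mul_cos_le hp hs hsymm (by positivity)
          (div_mul_cancel₀ _ hpip.ne')
    _ = 4 / π * (pip (p / (p - 1)) / π) ^ (1 / (p - 1)) * (j : ℝ) ^ (-(p / (p - 1))) := by
        rw [hexp, pip_conjExponent (by linarith),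
          show (p - 1) / ω = (p - 1) * pip p / π * (j : ℝ)⁻¹ by rw [hω]; field_simp,
          mul_rpow (by positivity) (by positivity), hω]
        field_simp
        ring

end FourierCoefficient

theorem fourier_coeff_bound_p_gt_two_general (p : ℝ) (hp : 2 < p) (s : ℝ → ℝ)
    (hs : LeftInvOn s (Fp p) (Icc 0 1))
    (hsym : ∀ x, s (pip p / 2 - x) = s (pip p / 2 + x)) (j : ℕ) (hj : 0 < j) :
    |2 * ∫ x in (0 : ℝ)..1, deriv s (pip p * x) * cos (j * π * x)| <
      2 * (2 * π / ((p / (p - 1)) * sin (π / (p / (p - 1))))) / (π ^ 2 * (p - 1)) *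
        (2 + π ^ 2 / 2 * (p - 2)) * (j : ℝ) ^ (-(p / (p - 1))) := by
  have hp1 : 1 < p / (p - 1) := (one_lt_div (by linarith)).mpr (by linarith)
  have hpip : 2 ≤ pip (p / (p - 1)) := two_le_pip hp1
  have hsymm : ∀ x, s (pip p - x) = s x := fun x ↦ by
    convert hsym (x - pip p / 2) using 2 <;> ring
  rw [← pip_eq hp1]
  refine (abs_fourier_coeff_le hp.le hs hsymm hj).trans_lt ?_
  have hlarge : 1 < pip (p / (p - 1)) / π * (π ^ 2 / 4) := by
    rw [show pip (p / (p - 1)) / π * (π ^ 2 / 4) = pip (p / (p - 1)) * π / 4 by field_simp]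
    nlinarith [pi_gt_three]
  have hbernoulli := rpow_one_div_lt_of_one_lt_mul (q := p - 1) (by linarith) (by positivity) hlarge
  calc 4 / π * (pip (p / (p - 1)) / π) ^ (1 / (p - 1)) * (j : ℝ) ^ (-(p / (p - 1)))
      < 4 / π * (pip (p / (p - 1)) / π / (p - 1) * (1 + π ^ 2 / 4 * (p - 1 - 1))) *
          (j : ℝ) ^ (-(p / (p - 1))) := by gcongr
    _ = 2 * pip (p / (p - 1)) / (π ^ 2 * (p - 1)) * (2 + π ^ 2 / 2 * (p - 2)) *
          (j : ℝ) ^ (-(p / (p - 1))) := by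
        field_simp
        ring

theorem fourier_coeff_bound_p_gt_two (p : ℝ) (hp : 2 < p) (s : ℝ → ℝ)
    (hinv₁ : ∀ y ∈ Icc (0:ℝ) 1, s (Fp p y) = y)
    (hinv₂ : ∀ x ∈ Icc (0:ℝ) (pip p / 2), Fp p (s x) = x)
    (hodd : ∀ x, s (-x) = -s x)
    (hsym : ∀ x, s (pip p / 2 - x) = s (pip p / 2 + x))
    (j : ℕ) (hj : 3 ≤ j) :
    |2 * ∫ x in (0:ℝ)..1, deriv s (pip p * x) * Real.cos (j * π * x)| <
      2 * (2 * π / ((p / (p - 1)) * Real.sin (π / (p / (p - 1))))) / (π^2 * (p - 1)) *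
        (2 + π^2 / 2 * (p - 2)) * (j : ℝ) ^ (-(p / (p - 1))) :=
  fourier_coeff_bound_p_gt_two_general p hp s (fun y hy ↦ hinv₁ y hy) hsym j (by omega)
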